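/- arXiv:2302.01832 — 2 statements merged into one kernel-verified Lean document; each statement's English description precedes it below -/
import Mathlib

section
/- (F. and M. Riesz theorem) If μ is a finite complex Borel measure on the circle ℝ/2πℤ whose Fourier coefficients μ̂(n) = ∫ e^{−int} dμ(t) vanish for all negative integers n, then μ is absolutely continuous with respect to Lebesgue measure. -/
open MeasureTheory Complex

local instance : Fact ((0:ℝ) < 2 * Real.pi) := ⟨by positivity⟩

/-- Integration of a (bounded measurable) complex-valued function against a complex
measure, via the Jordan decompositions of its real and imaginary parts. -/
noncomputable def cmIntegral (μ : ComplexMeasure (AddCircle (2 * Real.pi)))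
    (f : AddCircle (2 * Real.pi) → ℂ) : ℂ :=
  ((∫ t, f t ∂μ.re.toJordanDecomposition.posPart)
      - ∫ t, f t ∂μ.re.toJordanDecomposition.negPart)
    + Complex.I * ((∫ t, f t ∂μ.im.toJordanDecomposition.posPart)
      - ∫ t, f t ∂μ.im.toJordanDecomposition.negPart)

/-- The `n`-th Fourier coefficient `μ̂(n) = ∫ e^{−int} dμ(t)` of a complex measure on
the circle `ℝ/2πℤ`. -/
noncomputable def fourierCoeffCM (μ : ComplexMeasure (AddCircle (2 * Real.pi)))
    (n : ℤ) : ℂ :=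
  cmIntegral μ (fun t => fourier (-n) t)

/-!
Let `K` be a closed null set of the circle. There are functions `F δ`, holomorphic on a
neighbourhood of the closed unit disc and bounded by `1` there, which tend as `δ → 0⁺` to `0` on
`K` and to `1` at every other point of the unit circle and at the origin. The integral of `e^{int}`
against `μ` vanishes for `n ≥ 1`, so expanding in Taylor series gives
`∫ F δ (e^{it}) dμ(t) = F δ 0 * μ(𝕋)`, and letting `δ → 0⁺` gives `μ(𝕋 ∖ K) = μ(𝕋)`, that is
`μ(K) = 0`. Regularity extends this from closed to Borel null sets.

The function `F δ` is `exp (-U)`, where `U` is, up to normalisation, the Cauchy transform of arc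
length on the `δ`-thickening of `K`, evaluated on a slightly larger disc: its real part is
nonnegative, and large near `K`.
-/

open Filter Topology Metric Set
open scoped ComplexConjugate

section CauchyKernel

variable {δ : ℝ} {ζ : ℂ}

theorem norm_one_sub_le_norm_one_add_sub (hδ : 0 ≤ δ) (hζ : ‖ζ‖ ≤ 1) :
    ‖1 - ζ‖ ≤ ‖1 + δ - ζ‖ := by
  have hre : ζ.re ≤ 1 := (re_le_norm ζ).trans hζ
  simp only [norm_eq_sqrt_sq_add_sq, add_re, sub_re, one_re, ofReal_re, add_im, sub_im, one_im,
    ofReal_im, add_zero]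
  gcongr
  linarith

theorem le_re_one_add_sub (hζ : ‖ζ‖ ≤ 1) : δ ≤ (1 + δ - ζ).re := by
  have hre : ζ.re ≤ 1 := (re_le_norm ζ).trans hζ
  simp only [sub_re, add_re, one_re, ofReal_re]
  linarith

theorem re_inv_one_add_sub_nonneg (hδ : 0 ≤ δ) (hζ : ‖ζ‖ ≤ 1) : 0 ≤ (1 + δ - ζ)⁻¹.re := by
  rw [inv_re]
  exact div_nonneg (hδ.trans (le_re_one_add_sub hζ)) (normSq_nonneg _)

theorem inv_four_mul_le_re_inv_one_add_sub (hδ : 0 < δ) (hζ : ‖ζ‖ ≤ 1) (hζδ : ‖1 - ζ‖ ≤ δ) :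
    (4 * δ)⁻¹ ≤ (1 + δ - ζ)⁻¹.re := by
  have hre : δ ≤ (1 + δ - ζ).re := le_re_one_add_sub hζ
  have hnorm : ‖1 + δ - ζ‖ ≤ 2 * δ :=
    calc ‖1 + δ - ζ‖ = ‖(1 - ζ) + δ‖ := by ring_nf
      _ ≤ ‖1 - ζ‖ + ‖(δ : ℂ)‖ := norm_add_le _ _
      _ ≤ 2 * δ := by rw [norm_real, Real.norm_of_nonneg hδ.le]; linarith
  have hpos : 0 < ‖1 + δ - ζ‖ := hδ.trans_le (hre.trans (re_le_norm _))
  calc (4 * δ)⁻¹ = δ / (2 * δ) ^ 2 := by field_simp; norm_num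
    _ ≤ (1 + δ - ζ).re / ‖1 + δ - ζ‖ ^ 2 := by gcongr; exact hδ.le.trans hre
    _ = (1 + δ - ζ)⁻¹.re := by rw [inv_re, normSq_eq_norm_sq]

end CauchyKernel

/-- The Cauchy transform `z ↦ ∫ (ρ - z w̄)⁻¹ dν(w)` of a measure on the plane. For `ν` carried by
the closed unit disc it is holomorphic on the disc of radius `ρ`. -/
noncomputable def cauchyTransform (ν : Measure ℂ) (ρ : ℝ) (z : ℂ) : ℂ :=
  ∫ w, (ρ - z * conj w)⁻¹ ∂ν

section CauchyTransform

variable {ν : Measure ℂ} {ρ δ : ℝ} {z : ℂ}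

theorem cauchyTransform_zero : cauchyTransform ν ρ 0 = ν.real univ / ρ := by
  simp [cauchyTransform, div_eq_mul_inv]

theorem sub_le_norm_sub_mul_conj {R : ℝ} {w : ℂ} (hw : ‖w‖ ≤ 1) (hz : ‖z‖ ≤ R) :
    ρ - R ≤ ‖ρ - z * conj w‖ := by
  have hzw : ‖z * conj w‖ ≤ R := by
    rw [norm_mul, norm_conj]
    exact (mul_le_of_le_one_right (norm_nonneg z) hw).trans hz
  have hρ : ρ ≤ ‖(ρ : ℂ)‖ := by simpa using le_abs_self ρ
  linarith [norm_sub_norm_le (ρ : ℂ) (z * conj w)]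

variable [IsFiniteMeasure ν]

theorem integrable_inv_sub_mul_conj (hν : ∀ᵐ w ∂ν, ‖w‖ ≤ 1) (hz : ‖z‖ < ρ) :
    Integrable (fun w => (ρ - z * conj w)⁻¹) ν := by
  refine .of_bound (by fun_prop) (ρ - ‖z‖)⁻¹ ?_
  filter_upwards [hν] with w hw
  rw [norm_inv]
  exact inv_anti₀ (sub_pos.2 hz) (sub_le_norm_sub_mul_conj hw le_rfl)

theorem differentiableOn_cauchyTransform (hν : ∀ᵐ w ∂ν, ‖w‖ ≤ 1) :
    DifferentiableOn ℂ (cauchyTransform ν ρ) (ball 0 ρ) := by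
  intro z hz
  obtain ⟨R, hzR, hRρ⟩ := exists_between (mem_ball_zero_iff.1 hz)
  have hlower : ∀ w : ℂ, ‖w‖ ≤ 1 → ∀ x ∈ ball (0 : ℂ) R, ρ - R ≤ ‖ρ - x * conj w‖ :=
    fun w hw x hx => sub_le_norm_sub_mul_conj hw (mem_ball_zero_iff.1 hx).le
  refine (hasDerivAt_integral_of_dominated_loc_of_deriv_le
    (F' := fun x w => conj w / (ρ - x * conj w) ^ 2) (bound := fun _ => 1 / (ρ - R) ^ 2)
    (isOpen_ball.mem_nhds (mem_ball_zero_iff.2 hzR)) (.of_forall fun x => by fun_prop)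
    (integrable_inv_sub_mul_conj hν (hzR.trans hRρ)) (Measurable.aestronglyMeasurable (by fun_prop))
    ?_ (integrable_const _) ?_).2.differentiableAt.differentiableWithinAt
  · filter_upwards [hν] with w hw x hx
    rw [norm_div, norm_pow, norm_conj]
    have := sub_pos.2 hRρ
    gcongr
    exact hlower w hw x hx
  · filter_upwards [hν] with w hw x hx
    have hne : ρ - x * conj w ≠ 0 := norm_pos_iff.1 ((sub_pos.2 hRρ).trans_le (hlower w hw x hx))
    simpa using (((hasDerivAt_id x).mul_const (conj w)).const_sub (ρ : ℂ)).fun_inv hne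

theorem re_cauchyTransform (hν : ∀ᵐ w ∂ν, ‖w‖ ≤ 1) (hz : ‖z‖ < ρ) :
    (cauchyTransform ν ρ z).re = ∫ w, (ρ - z * conj w)⁻¹.re ∂ν :=
  (integral_re (integrable_inv_sub_mul_conj hν hz)).symm

theorem norm_mul_conj_le_one {w : ℂ} (hz : ‖z‖ ≤ 1) (hw : ‖w‖ ≤ 1) : ‖z * conj w‖ ≤ 1 := by
  rw [norm_mul, norm_conj]
  exact mul_le_one₀ hz (norm_nonneg w) hw

theorem norm_one_sub_mul_conj (w : ℂ) (hz : ‖z‖ = 1) : ‖1 - z * conj w‖ = ‖w - z‖ := by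
  have hzz : z * conj z = 1 := by rw [mul_conj, normSq_eq_norm_sq, hz]; norm_num
  rw [← hzz, ← mul_sub, ← map_sub, norm_mul, norm_conj, hz, one_mul, norm_sub_rev]

theorem re_cauchyTransform_nonneg (hν : ∀ᵐ w ∂ν, ‖w‖ ≤ 1) (hδ : 0 < δ) (hz : ‖z‖ ≤ 1) :
    0 ≤ (cauchyTransform ν (1 + δ) z).re := by
  rw [re_cauchyTransform hν (by linarith)]
  refine integral_nonneg_of_ae ?_
  filter_upwards [hν] with w hw
  simpa using re_inv_one_add_sub_nonneg hδ.le (norm_mul_conj_le_one hz hw)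

theorem measureReal_ball_div_le_re_cauchyTransform (hν : ∀ᵐ w ∂ν, ‖w‖ ≤ 1) (hδ : 0 < δ)
    (hz : ‖z‖ = 1) : ν.real (ball z δ) / (4 * δ) ≤ (cauchyTransform ν (1 + δ) z).re := by
  have hint := (integrable_inv_sub_mul_conj hν (ρ := 1 + δ) (z := z) (by linarith)).re
  calc ν.real (ball z δ) / (4 * δ)
      = ∫ _ in ball z δ, (4 * δ)⁻¹ ∂ν := by simp [div_eq_mul_inv]
    _ ≤ ∫ w in ball z δ, (↑(1 + δ) - z * conj w)⁻¹.re ∂ν := by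
        refine setIntegral_mono_on_ae (integrable_const _) hint.integrableOn measurableSet_ball ?_
        filter_upwards [hν] with w hw hwz
        simpa using inv_four_mul_le_re_inv_one_add_sub hδ (norm_mul_conj_le_one hz.le hw)
          ((norm_one_sub_mul_conj w hz).trans_le (mem_ball_iff_norm.1 hwz).le)
    _ ≤ ∫ w, (↑(1 + δ) - z * conj w)⁻¹.re ∂ν := by
        refine setIntegral_le_integral hint ?_
        filter_upwards [hν] with w hw
        simpa using re_inv_one_add_sub_nonneg hδ.le (norm_mul_conj_le_one hz.le hw)
    _ = (cauchyTransform ν (1 + δ) z).re := (re_cauchyTransform hν (by linarith)).symm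

theorem norm_cauchyTransform_le {a : ℝ} (hν : ∀ᵐ w ∂ν, ‖w‖ ≤ 1) (hδ : 0 ≤ δ) (hz : ‖z‖ = 1)
    (ha : 0 < a) (hza : ∀ᵐ w ∂ν, a ≤ ‖w - z‖) :
    ‖cauchyTransform ν (1 + δ) z‖ ≤ a⁻¹ * ν.real univ := by
  refine norm_integral_le_of_norm_le_const ?_
  filter_upwards [hν, hza] with w hw hwa
  rw [norm_inv]
  refine inv_anti₀ ha (hwa.trans ?_)
  rw [← norm_one_sub_mul_conj w hz]
  simpa using norm_one_sub_le_norm_one_add_sub hδ (norm_mul_conj_le_one hz.le hw)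

end CauchyTransform

/-- The holomorphic function `U` whose exponential `exp (-U)` is `analyticCutoff`: the Cauchy
transform of `m` restricted to the `δ`-thickening of `K`. Dividing by the square root of the mass
`v` of the thickening leaves `U` of order `√v` away from `K` and at least of order `1 / √v` on
`K`. -/
noncomputable def cutoffExponent (m : Measure ℂ) (K : Set ℂ) (δ : ℝ) (z : ℂ) : ℂ :=
  (√(m.real (thickening δ K)))⁻¹ * cauchyTransform (m.restrict (thickening δ K)) (1 + δ) z

/-- The cutoff `exp (-U)`. When `m` is arc length on the unit circle and `K` is closed and null, it
is holomorphic near the closed unit disc, bounded by `1` there, and for small `δ` close to `0` on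
`K` and to `1` at the origin and on the rest of the unit circle. -/
noncomputable def analyticCutoff (m : Measure ℂ) (K : Set ℂ) (δ : ℝ) (z : ℂ) : ℂ :=
  cexp (-cutoffExponent m K δ z)

section AnalyticCutoff

variable {m : Measure ℂ} {K : Set ℂ} {δ : ℝ} {z : ℂ}

theorem re_cutoffExponent :
    (cutoffExponent m K δ z).re = (√(m.real (thickening δ K)))⁻¹ *
      (cauchyTransform (m.restrict (thickening δ K)) (1 + δ) z).re := by
  rw [cutoffExponent, re_ofReal_mul]

theorem norm_cutoffExponent_le {C : ℝ}
    (h : ‖cauchyTransform (m.restrict (thickening δ K)) (1 + δ) z‖ ≤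
      C * m.real (thickening δ K)) :
    ‖cutoffExponent m K δ z‖ ≤ C * √(m.real (thickening δ K)) := by
  rw [cutoffExponent, norm_mul, norm_real, norm_inv, Real.norm_of_nonneg (Real.sqrt_nonneg _)]
  calc (√(m.real (thickening δ K)))⁻¹ * _
      ≤ (√(m.real (thickening δ K)))⁻¹ * (C * m.real (thickening δ K)) := by gcongr
    _ = C * √(m.real (thickening δ K)) := by rw [mul_left_comm, inv_mul_eq_div, Real.div_sqrt]

variable [IsFiniteMeasure m]

theorem differentiableOn_analyticCutoff (hm : ∀ᵐ w ∂m, ‖w‖ ≤ 1) :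
    DifferentiableOn ℂ (analyticCutoff m K δ) (ball 0 (1 + δ)) :=
  ((differentiableOn_cauchyTransform (ae_restrict_of_ae hm)).const_mul _).neg.cexp

theorem norm_analyticCutoff_le_one (hm : ∀ᵐ w ∂m, ‖w‖ ≤ 1) (hδ : 0 < δ) (hz : ‖z‖ ≤ 1) :
    ‖analyticCutoff m K δ z‖ ≤ 1 := by
  rw [analyticCutoff, norm_exp, Real.exp_le_one_iff, neg_re, neg_nonpos, re_cutoffExponent]
  exact mul_nonneg (by positivity) (re_cauchyTransform_nonneg (ae_restrict_of_ae hm) hδ hz)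

theorem tendsto_sqrt_measureReal_thickening (hK : IsClosed K) (hmK : m K = 0) :
    Tendsto (fun δ => √(m.real (thickening δ K))) (𝓝[>] 0) (𝓝 0) := by
  have hlim := tendsto_measure_thickening_of_isClosed (μ := m) ⟨1, one_pos, measure_ne_top m _⟩ hK
  rw [hmK] at hlim
  simpa [measureReal_def] using ((ENNReal.tendsto_toReal ENNReal.zero_ne_top).comp hlim).sqrt

theorem tendsto_analyticCutoff_one {C : ℝ} (hK : IsClosed K) (hmK : m K = 0)
    (h : ∀ᶠ δ in 𝓝[>] 0, ‖cauchyTransform (m.restrict (thickening δ K)) (1 + δ) z‖ ≤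
      C * m.real (thickening δ K)) :
    Tendsto (analyticCutoff m K · z) (𝓝[>] 0) (𝓝 1) := by
  have hU : Tendsto (cutoffExponent m K · z) (𝓝[>] 0) (𝓝 0) :=
    squeeze_zero_norm' (h.mono fun δ => norm_cutoffExponent_le)
      (by simpa using (tendsto_sqrt_measureReal_thickening hK hmK).const_mul C)
  simpa [analyticCutoff, Function.comp_def] using (continuous_exp.tendsto _).comp hU.neg

theorem tendsto_analyticCutoff_zero (hK : IsClosed K) (hmK : m K = 0) :
    Tendsto (analyticCutoff m K · 0) (𝓝[>] 0) (𝓝 1) := by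
  refine tendsto_analyticCutoff_one (C := 1) hK hmK ?_
  filter_upwards [self_mem_nhdsWithin] with δ (hδ : 0 < δ)
  rw [cauchyTransform_zero, measureReal_restrict_apply_univ, ← ofReal_div, norm_real,
    Real.norm_of_nonneg (by positivity), one_mul]
  exact div_le_self measureReal_nonneg (by linarith)

theorem tendsto_analyticCutoff_of_notMem (hm : ∀ᵐ w ∂m, ‖w‖ ≤ 1) (hK : IsClosed K)
    (hmK : m K = 0) (hz : ‖z‖ = 1) (hzK : z ∉ K) :
    Tendsto (analyticCutoff m K · z) (𝓝[>] 0) (𝓝 1) := by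
  obtain ⟨ε, hε, hball⟩ := Metric.isOpen_iff.1 hK.isOpen_compl z hzK
  have hfar : ∀ δ < ε / 2, ∀ w ∈ thickening δ K, ε / 2 ≤ ‖w - z‖ := by
    intro δ hδ w hw
    obtain ⟨x, hx, hwx⟩ := mem_thickening_iff.1 hw
    have hxz : ε ≤ dist x z := not_lt.1 fun hlt => hball hlt hx
    rw [← dist_eq_norm]
    linarith [dist_triangle_left x z w]
  refine tendsto_analyticCutoff_one (C := (ε / 2)⁻¹) hK hmK ?_
  filter_upwards [self_mem_nhdsWithin, nhdsWithin_le_nhds (gt_mem_nhds (half_pos hε))]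
    with δ (hδ : 0 < δ) hδε
  simpa using norm_cauchyTransform_le (ae_restrict_of_ae hm) hδ.le hz (half_pos hε)
    (ae_restrict_of_forall_mem isOpen_thickening.measurableSet (hfar δ hδε))

theorem tendsto_analyticCutoff_of_mem {c : ℝ} (hm : ∀ᵐ w ∂m, ‖w‖ ≤ 1) (hK : IsClosed K)
    (hmK : m K = 0) (hz : ‖z‖ = 1) (hzK : z ∈ K) (hc : 0 < c)
    (hball : ∀ᶠ δ in 𝓝[>] 0, c * δ ≤ m.real (ball z δ)) :
    Tendsto (analyticCutoff m K · z) (𝓝[>] 0) (𝓝 0) := by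
  have hv_pos : ∀ᶠ δ in 𝓝[>] 0, 0 < √(m.real (thickening δ K)) := by
    filter_upwards [hball, self_mem_nhdsWithin] with δ hδc (hδ : 0 < δ)
    exact Real.sqrt_pos.2 ((mul_pos hc hδ).trans_le
      (hδc.trans (measureReal_mono (ball_subset_thickening hzK δ))))
  have hv_inv : Tendsto (fun δ => (√(m.real (thickening δ K)))⁻¹ * (c / 4)) (𝓝[>] 0) atTop :=
    (tendsto_inv_nhdsGT_zero.comp (tendsto_nhdsWithin_iff.2
      ⟨tendsto_sqrt_measureReal_thickening hK hmK, hv_pos⟩)).atTop_mul_const (by positivity)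
  have hre : Tendsto (fun δ => (cutoffExponent m K δ z).re) (𝓝[>] 0) atTop := by
    refine tendsto_atTop_mono' _ ?_ hv_inv
    filter_upwards [hball, self_mem_nhdsWithin] with δ hδc (hδ : 0 < δ)
    have hlower := measureReal_ball_div_le_re_cauchyTransform
      (ae_restrict_of_ae (s := thickening δ K) hm) hδ hz
    rw [measureReal_restrict_apply measurableSet_ball,
      inter_eq_left.2 (ball_subset_thickening hzK δ)] at hlower
    rw [re_cutoffExponent]
    gcongr
    calc c / 4 = c * δ / (4 * δ) := by field_simp
      _ ≤ m.real (ball z δ) / (4 * δ) := by gcongr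
      _ ≤ _ := hlower
  refine tendsto_exp_comap_re_atBot.comp (tendsto_comap_iff.2 ?_)
  simpa [Function.comp_def] using hre

end AnalyticCutoff

section AddCircle

variable {T : ℝ}

theorem continuous_coe_toCircle : Continuous fun t : AddCircle T => (t.toCircle : ℂ) :=
  continuous_subtype_val.comp AddCircle.continuous_toCircle

theorem injective_coe_toCircle (hT : T ≠ 0) :
    Function.Injective fun t : AddCircle T => (t.toCircle : ℂ) :=
  Subtype.val_injective.comp (AddCircle.injective_toCircle hT)

theorem continuous_comp_toCircle {F : ℂ → ℂ} {ρ : ℝ} (hρ : 1 < ρ)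
    (hF : ContinuousOn F (ball 0 ρ)) : Continuous fun t : AddCircle T => F t.toCircle :=
  hF.comp_continuous continuous_coe_toCircle fun _ =>
    mem_ball_zero_iff.2 ((Circle.norm_coe _).trans_lt hρ)

theorem norm_toCircle_sub_one_le (x : AddCircle T) :
    ‖(x.toCircle : ℂ) - 1‖ ≤ 2 * Real.pi / |T| * ‖x‖ := by
  induction x using QuotientAddGroup.induction_on with | H x => ?_
  obtain rfl | _ := eq_or_ne T 0
  · simp [AddCircle.toCircle_apply_mk]
  set y := x - round (T⁻¹ * x) * T with hy
  have hxy : (x : AddCircle T) = y := by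
    rw [hy, AddCircle.coe_sub, ← zsmul_eq_mul, AddCircle.coe_zsmul, AddCircle.coe_period, smul_zero,
      sub_zero]
  rw [AddCircle.norm_eq, ← hy, hxy, AddCircle.toCircle_apply_mk, Circle.coe_exp, mul_comm _ I]
  refine Real.norm_exp_I_mul_ofReal_sub_one_le.trans_eq ?_
  rw [Real.norm_eq_abs, abs_mul, abs_div, abs_of_pos Real.two_pi_pos]

theorem norm_toCircle_sub_toCircle_le (s t : AddCircle T) :
    ‖(s.toCircle : ℂ) - t.toCircle‖ ≤ 2 * Real.pi / |T| * dist s t :=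
  calc ‖(s.toCircle : ℂ) - t.toCircle‖ = ‖(((s - t).toCircle : ℂ) - 1) * t.toCircle‖ := by
        rw [sub_mul, one_mul, ← Circle.coe_mul, ← AddCircle.toCircle_add, sub_add_cancel]
    _ = ‖((s - t).toCircle : ℂ) - 1‖ := by rw [norm_mul, Circle.norm_coe, mul_one]
    _ ≤ 2 * Real.pi / |T| * dist s t := by
        rw [dist_eq_norm]; exact norm_toCircle_sub_one_le _

variable [hT : Fact (0 < T)]

/-- Arc length on the circle of length `T`, transported to the unit circle of the plane. -/
noncomputable def circleMeasure (T : ℝ) [Fact (0 < T)] : Measure ℂ :=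
  (volume : Measure (AddCircle T)).map fun t => (t.toCircle : ℂ)

instance : IsFiniteMeasure (circleMeasure T) :=
  Measure.isFiniteMeasure_map _ _

theorem ae_norm_le_one_circleMeasure : ∀ᵐ w ∂circleMeasure T, ‖w‖ ≤ 1 :=
  (ae_map_iff continuous_coe_toCircle.aemeasurable (measurableSet_le measurable_norm
    measurable_const)).2 (.of_forall fun _ => (Circle.norm_coe _).le)

theorem mul_le_circleMeasure_ball (t : AddCircle T) {δ : ℝ} (hδ : 0 < δ) (hδ1 : δ ≤ 1) :
    T / (2 * Real.pi) * δ ≤ (circleMeasure T).real (ball (t.toCircle : ℂ) δ) := by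
  have hT0 : 0 < T := hT.out
  have hpi : 1 < 2 * Real.pi := by linarith [Real.pi_gt_three]
  have hsub : closedBall t (T / (4 * Real.pi) * δ) ⊆
      (fun t : AddCircle T => (t.toCircle : ℂ)) ⁻¹' ball (t.toCircle : ℂ) δ := by
    intro s hs
    rw [mem_preimage, mem_ball_iff_norm]
    calc ‖(s.toCircle : ℂ) - t.toCircle‖ ≤ 2 * Real.pi / |T| * dist s t :=
          norm_toCircle_sub_toCircle_le s t
      _ ≤ 2 * Real.pi / |T| * (T / (4 * Real.pi) * δ) := by gcongr; exact mem_closedBall.1 hs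
      _ = δ / 2 := by rw [abs_of_pos hT0]; field_simp; norm_num
      _ < δ := half_lt_self hδ
  calc T / (2 * Real.pi) * δ = volume.real (closedBall t (T / (4 * Real.pi) * δ)) := by
        have hmin : 2 * (T / (4 * Real.pi) * δ) = T / (2 * Real.pi) * δ := by ring
        have hle : T / (2 * Real.pi) * δ ≤ T :=
          (mul_le_of_le_one_right (by positivity) hδ1).trans (div_le_self hT0.le hpi.le)
        rw [measureReal_def, AddCircle.volume_closedBall, hmin, min_eq_right hle,
          ENNReal.toReal_ofReal (by positivity)]
    _ ≤ volume.real ((fun t : AddCircle T => (t.toCircle : ℂ)) ⁻¹' ball (t.toCircle : ℂ) δ) :=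
        measureReal_mono hsub
    _ = (circleMeasure T).real (ball (t.toCircle : ℂ) δ) :=
        (map_measureReal_apply continuous_coe_toCircle.measurable measurableSet_ball).symm

theorem circleMeasure_image_toCircle {K : Set (AddCircle T)} (hK : IsClosed K) :
    circleMeasure T ((fun t : AddCircle T => (t.toCircle : ℂ)) '' K) = volume K := by
  rw [circleMeasure, Measure.map_apply continuous_coe_toCircle.measurable
    (hK.isCompact.image continuous_coe_toCircle).measurableSet,
    preimage_image_eq _ (injective_coe_toCircle hT.out.ne')]

theorem tendsto_analyticCutoff_toCircle {K : Set (AddCircle T)} (hK : IsClosed K)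
    (hK0 : volume K = 0) (t : AddCircle T) :
    Tendsto (fun δ => analyticCutoff (circleMeasure T)
      ((fun t : AddCircle T => (t.toCircle : ℂ)) '' K) δ t.toCircle) (𝓝[>] 0)
      (𝓝 (Kᶜ.indicator 1 t)) := by
  have hC := (hK.isCompact.image continuous_coe_toCircle).isClosed
  have hmC := (circleMeasure_image_toCircle hK).trans hK0
  by_cases ht : t ∈ K
  · rw [indicator_of_notMem (notMem_compl_iff.2 ht)]
    refine tendsto_analyticCutoff_of_mem ae_norm_le_one_circleMeasure hC hmC (Circle.norm_coe _)
      (mem_image_of_mem _ ht) (div_pos hT.out Real.two_pi_pos) ?_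
    filter_upwards [Ioc_mem_nhdsGT one_pos] with δ hδ
    exact mul_le_circleMeasure_ball t hδ.1 hδ.2
  · rw [indicator_of_mem (mem_compl ht)]
    exact tendsto_analyticCutoff_of_notMem ae_norm_le_one_circleMeasure hC hmC (Circle.norm_coe _)
      (mt (injective_coe_toCircle hT.out.ne').mem_set_image.1 ht)

end AddCircle

section ComplexMeasure

variable {μ : ComplexMeasure (AddCircle (2 * Real.pi))}

theorem cmIntegral_const_mul (c : ℂ) (f : AddCircle (2 * Real.pi) → ℂ) :
    cmIntegral μ (fun t => c * f t) = c * cmIntegral μ f := by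
  simp only [cmIntegral, integral_const_mul]
  ring

theorem cmIntegral_indicator_one {E : Set (AddCircle (2 * Real.pi))} (hE : MeasurableSet E) :
    cmIntegral μ (E.indicator 1) = μ E := by
  have hre : (μ E).re = _ := SignedMeasure.apply_eq_posPart_real_sub_negPart_real μ.re hE
  have him : (μ E).im = _ := SignedMeasure.apply_eq_posPart_real_sub_negPart_real μ.im hE
  have hint (ν : Measure (AddCircle (2 * Real.pi))) :
      ∫ t, E.indicator (1 : AddCircle (2 * Real.pi) → ℂ) t ∂ν = ν.real E := by
    simp [integral_indicator hE]
  rw [← re_add_im (μ E), hre, him]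
  simp only [cmIntegral, hint, ofReal_sub, mul_comm I]

theorem cmIntegral_one : cmIntegral μ 1 = μ univ := by
  rw [← cmIntegral_indicator_one .univ, indicator_univ]

theorem tendsto_cmIntegral {ι : Type*} {l : Filter ι} [l.IsCountablyGenerated]
    {F : ι → AddCircle (2 * Real.pi) → ℂ} {f : AddCircle (2 * Real.pi) → ℂ} {C : ℝ}
    (hF : ∀ᶠ i in l, Measurable (F i)) (hC : ∀ᶠ i in l, ∀ t, ‖F i t‖ ≤ C)
    (hlim : ∀ t, Tendsto (F · t) l (𝓝 (f t))) :
    Tendsto (fun i => cmIntegral μ (F i)) l (𝓝 (cmIntegral μ f)) := by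
  have hν (ν : Measure (AddCircle (2 * Real.pi))) [IsFiniteMeasure ν] :
      Tendsto (fun i => ∫ t, F i t ∂ν) l (𝓝 (∫ t, f t ∂ν)) :=
    tendsto_integral_filter_of_dominated_convergence (fun _ => C)
      (hF.mono fun _ hi => hi.aestronglyMeasurable) (hC.mono fun _ hi => .of_forall hi)
      (integrable_const C) (.of_forall hlim)
  exact ((hν _).sub (hν _)).add (((hν _).sub (hν _)).const_mul I)

theorem hasSum_cmIntegral {ι : Type*} [Countable ι] {F : ι → AddCircle (2 * Real.pi) → ℂ}
    {f : AddCircle (2 * Real.pi) → ℂ} {C : ι → ℝ} (hF : ∀ i, Measurable (F i))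
    (hFC : ∀ i t, ‖F i t‖ ≤ C i) (hC : Summable C) (hsum : ∀ t, HasSum (F · t) (f t)) :
    HasSum (fun i => cmIntegral μ (F i)) (cmIntegral μ f) := by
  have hν (ν : Measure (AddCircle (2 * Real.pi))) [IsFiniteMeasure ν] :
      HasSum (fun i => ∫ t, F i t ∂ν) (∫ t, f t ∂ν) :=
    hasSum_integral_of_dominated_convergence (fun i _ => C i)
      (fun i => (hF i).aestronglyMeasurable) (fun i => .of_forall (hFC i))
      (.of_forall fun _ => hC) (integrable_const _) (.of_forall hsum)
  exact ((hν _).sub (hν _)).add (((hν _).sub (hν _)).mul_left I)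

theorem cmIntegral_toCircle_pow (hμ : ∀ n : ℤ, n < 0 → fourierCoeffCM μ n = 0) {n : ℕ}
    (hn : n ≠ 0) :
    cmIntegral μ (fun t => (t.toCircle : ℂ) ^ n) = 0 := by
  rw [← hμ (-n) (by omega), fourierCoeffCM]
  simp [AddCircle.toCircle_nsmul]

theorem cmIntegral_comp_toCircle (hμ : ∀ n : ℤ, n < 0 → fourierCoeffCM μ n = 0) {F : ℂ → ℂ}
    {ρ : ℝ} (hρ : 1 < ρ) (hF : DifferentiableOn ℂ F (ball 0 ρ)) :
    cmIntegral μ (fun t => F t.toCircle) = F 0 * μ univ := by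
  set a : ℕ → ℂ := fun n => (n.factorial : ℂ)⁻¹ * iteratedDeriv n F 0 with ha
  have hTaylor {z : ℂ} (hz : ‖z‖ = 1) : HasSum (fun n => a n * z ^ n) (F z) := by
    have hz_mem : z ∈ ball 0 ρ := mem_ball_zero_iff.2 (hz.trans_lt hρ)
    simpa only [ha, smul_eq_mul, sub_zero, mul_left_comm, mul_comm] using
      hasSum_taylorSeries_on_ball hF hz_mem
  have ha_sum : Summable fun n => ‖a n‖ := by simpa using (hTaylor norm_one).summable.norm
  have hsum : HasSum (fun n => cmIntegral μ fun t => a n * (t.toCircle : ℂ) ^ n)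
      (cmIntegral μ fun t => F t.toCircle) :=
    hasSum_cmIntegral
      (fun n => ((continuous_coe_toCircle.pow n).const_mul (a n)).measurable)
      (fun n t => by rw [norm_mul, norm_pow, Circle.norm_coe, one_pow, mul_one])
      ha_sum (fun t => hTaylor (Circle.norm_coe _))
  refine hsum.unique ?_
  convert hasSum_single 0 fun n hn => ?_ using 1
  · simp_rw [cmIntegral_const_mul, pow_zero, ← cmIntegral_one]
    simp [ha, Pi.one_def]
  · rw [cmIntegral_const_mul, cmIntegral_toCircle_pow hμ hn, mul_zero]

theorem apply_eq_zero_of_isClosed_of_volume_eq_zero {μ : ComplexMeasure (AddCircle (2 * Real.pi))}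
    (hμ : ∀ n : ℤ, n < 0 → fourierCoeffCM μ n = 0) {K : Set (AddCircle (2 * Real.pi))}
    (hK : IsClosed K) (hK0 : volume K = 0) : μ K = 0 := by
  set F := analyticCutoff (circleMeasure (2 * Real.pi))
    ((fun t : AddCircle (2 * Real.pi) => (t.toCircle : ℂ)) '' K)
  have hF (δ : ℝ) : DifferentiableOn ℂ (F δ) (ball 0 (1 + δ)) :=
    differentiableOn_analyticCutoff ae_norm_le_one_circleMeasure
  have hpos : ∀ᶠ δ : ℝ in 𝓝[>] 0, 0 < δ := self_mem_nhdsWithin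
  have hlim_compl : Tendsto (fun δ => F δ 0 * μ univ) (𝓝[>] 0) (𝓝 (μ Kᶜ)) := by
    rw [← cmIntegral_indicator_one hK.measurableSet.compl]
    refine (tendsto_cmIntegral (C := 1) (hpos.mono fun δ hδ => ?_) (hpos.mono fun δ hδ t => ?_)
      (tendsto_analyticCutoff_toCircle hK hK0)).congr' (hpos.mono fun δ hδ => ?_)
    · exact (continuous_comp_toCircle (lt_add_of_pos_right 1 hδ) (hF δ).continuousOn).measurable
    · exact norm_analyticCutoff_le_one ae_norm_le_one_circleMeasure hδ (Circle.norm_coe _).le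
    · exact cmIntegral_comp_toCircle hμ (lt_add_of_pos_right 1 hδ) (hF δ)
  have hlim_univ : Tendsto (fun δ => F δ 0 * μ univ) (𝓝[>] 0) (𝓝 (μ univ)) := by
    simpa using (tendsto_analyticCutoff_zero
      (hK.isCompact.image continuous_coe_toCircle).isClosed
      ((circleMeasure_image_toCircle hK).trans hK0)).mul_const (μ univ)
  have hcompl : μ Kᶜ = μ univ := tendsto_nhds_unique hlim_compl hlim_univ
  simpa [VectorMeasure.of_compl hK.measurableSet] using hcompl

end ComplexMeasure

section Regularity

variable {X V : Type*} [MeasurableSpace X] {ν : Measure X}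

instance isFiniteMeasure_variation (μ : SignedMeasure X) : IsFiniteMeasure μ.variation := by
  rw [← SignedMeasure.totalVariation_eq_variation]
  infer_instance

variable [TopologicalSpace X] [TopologicalSpace.PseudoMetrizableSpace X] [BorelSpace X]

theorem vectorMeasure_absolutelyContinuous_of_isClosed [NormedAddCommGroup V]
    {μ : VectorMeasure X V} [IsFiniteMeasure μ.variation]
    (h : ∀ K, IsClosed K → ν K = 0 → μ K = 0) :
    μ ≪ᵥ ν.toENNRealVectorMeasure := by
  refine VectorMeasure.AbsolutelyContinuous.mk fun E hE hνE => ?_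
  rw [Measure.toENNRealVectorMeasure_apply_measurable hE] at hνE
  refine enorm_eq_zero.1 (nonpos_iff_eq_zero.1 (le_of_forall_pos_le_add fun ε hε => ?_))
  obtain ⟨K, hKE, hK, hlt⟩ := hE.exists_isClosed_sdiff_lt (measure_ne_top μ.variation E) hε.ne'
  calc ‖μ E‖ₑ = ‖μ (E \ K)‖ₑ := by
        rw [← VectorMeasure.of_add_of_sdiff hK.measurableSet hE hKE,
          h K hK (measure_mono_null hKE hνE), zero_add]
    _ ≤ μ.variation (E \ K) := VectorMeasure.enorm_measure_le_variation ..
    _ ≤ 0 + ε := by rw [zero_add]; exact hlt.le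

theorem complexMeasure_absolutelyContinuous_of_isClosed {μ : ComplexMeasure X}
    (h : ∀ K, IsClosed K → ν K = 0 → μ K = 0) : μ ≪ᵥ ν.toENNRealVectorMeasure :=
  (ComplexMeasure.absolutelyContinuous_ennreal_iff _ _).2
    ⟨vectorMeasure_absolutelyContinuous_of_isClosed fun K hK hνK => congr_arg re (h K hK hνK),
      vectorMeasure_absolutelyContinuous_of_isClosed fun K hK hνK => congr_arg im (h K hK hνK)⟩

end Regularity

/-- F. and M. Riesz theorem: a finite complex Borel measure on the circle whose Fourier
coefficients vanish for all negative integers is absolutely continuous with respect to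
Lebesgue (Haar) measure. -/
theorem riesz_brothers (μ : ComplexMeasure (AddCircle (2 * Real.pi)))
    (h : ∀ n : ℤ, n < 0 → fourierCoeffCM μ n = 0) :
    μ ≪ᵥ (volume : Measure (AddCircle (2 * Real.pi))).toENNRealVectorMeasure :=
  complexMeasure_absolutelyContinuous_of_isClosed fun _ hK hK0 =>
    apply_eq_zero_of_isClosed_of_volume_eq_zero h hK hK0
end

section
/- For v ∈ C_c^∞(ℝ²), ‖∂_y^{1/2} v‖²_{L²} ≤ C(‖∂_x v‖²_{L²} + ‖x ∂_y v‖²_{L²} + ‖v‖²_{L²}) in the sense that ∫ |η| |v̂(ξ,η)|² dξ dη ≤ C ∫ (ξ² + |∂̂_x(xv)-type terms|) ...; concretely: ∫_{ℝ²} |η| |v̂(ξ,η)|² dξdη ≤ C (‖∂_x v‖²_{L²} + ‖x∂_y v‖²_{L²} + ‖v‖²_{L²}), which follows from the commutator identity ∂_y = [∂_x, x∂_y] via |⟨∂_y v, w⟩| = |⟨x∂_y v, ∂_x w⟩ + ⟨∂_x v, x∂_y w⟩|. -/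
open MeasureTheory FourierTransform

/-- Partial derivative in the `x` direction on `ℝ² = EuclideanSpace ℝ (Fin 2)`. -/
noncomputable def pdx2 (f : EuclideanSpace ℝ (Fin 2) → ℂ) (p : EuclideanSpace ℝ (Fin 2)) : ℂ :=
  fderiv ℝ f p (EuclideanSpace.single 0 1)

/-- Partial derivative in the `y` direction on `ℝ² = EuclideanSpace ℝ (Fin 2)`. -/
noncomputable def pdy2 (f : EuclideanSpace ℝ (Fin 2) → ℂ) (p : EuclideanSpace ℝ (Fin 2)) : ℂ :=
  fderiv ℝ f p (EuclideanSpace.single 1 1)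

/-!
On the Fourier side the bracket `∂_y = [∂_x, x∂_y]` becomes `|η| = [∂_ξ, ξ|η|]`. Integrating
`∂_ξ (ξ|η|) = |η|` by parts against `|v̂|²` gives
`∫ |η||v̂|² = -2 ∫ Re (ξ v̂ · conj (|η| ∂_ξ v̂))`, and by Plancherel `2πξ v̂` and `η ∂_ξ v̂` have
the `L²` norms of `∂_x v` and `x∂_y v`. Since the weight `|η|` does not depend on `ξ`, its kink at
`η = 0` is never differentiated.
-/

open SchwartzMap LineDeriv Real
open scoped RealInnerProductSpace

section Schwartz

variable {E F : Type*} [NormedAddCommGroup E] [NormedSpace ℝ E] [MeasurableSpace E]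
  [OpensMeasurableSpace E] [NormedAddCommGroup F] [NormedSpace ℝ F]
  [SecondCountableTopologyEither E F] {μ : Measure E} [μ.HasTemperateGrowth]

theorem memLp_two_clm_smul_schwartzMap (ℓ : E →L[ℝ] ℝ) (f : 𝓢(E, F)) :
    MemLp (fun x ↦ ℓ x • f x) 2 μ := by
  have hℓ : (fun x ↦ ℓ x).HasTemperateGrowth := ℓ.hasTemperateGrowth
  simpa only [smulLeftCLM_apply hℓ] using (smulLeftCLM F (fun x ↦ ℓ x) f).memLp 2 μ

theorem integrable_norm_sq_clm_smul (ℓ : E →L[ℝ] ℝ) (f : 𝓢(E, F)) :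
    Integrable (fun x ↦ ‖ℓ x • f x‖ ^ 2) μ :=
  (memLp_two_clm_smul_schwartzMap ℓ f).integrable_norm_pow two_ne_zero

end Schwartz

section RealInner

variable {F : Type*} [NormedAddCommGroup F] [InnerProductSpace ℝ F]

theorem norm_abs_mul_mul_two_inner_le (s t : ℝ) (u w : F) :
    ‖|t| * s * (2 * ⟪u, w⟫)‖ ≤ ‖s • u‖ ^ 2 + ‖t • w‖ ^ 2 :=
  calc ‖|t| * s * (2 * ⟪u, w⟫)‖
    _ = |t| * |s| * (2 * |⟪u, w⟫|) := by simp
    _ ≤ |t| * |s| * (2 * (‖u‖ * ‖w‖)) := by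
        gcongr
        exact abs_real_inner_le_norm u w
    _ = 2 * ‖s • u‖ * ‖t • w‖ := by
        simp only [norm_smul, norm_eq_abs]
        ring
    _ ≤ ‖s • u‖ ^ 2 + ‖t • w‖ ^ 2 := two_mul_le_add_sq _ _

variable {E : Type*} [NormedAddCommGroup E] [NormedSpace ℝ E] [FiniteDimensional ℝ E]
  [MeasurableSpace E] [BorelSpace E] {μ : Measure E} [μ.IsAddHaarMeasure]

theorem integral_abs_clm_mul_norm_sq_eq_neg {m : E →L[ℝ] ℝ} {c : E} (hm : m c = 0)
    (ℓ : E →L[ℝ] ℝ) (g : 𝓢(E, F)) :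
    ℓ c * ∫ x, |m x| * ‖g x‖ ^ 2 ∂μ =
      -∫ x, |m x| * ℓ x * (2 * ⟪g x, ∂_{c} g x⟫) ∂μ := by
  have hℓg := (memLp_two_clm_smul_schwartzMap (μ := μ) ℓ g).norm
  have hmg := (memLp_two_clm_smul_schwartzMap (μ := μ) m g).norm
  have hg_cont : Continuous g := g.continuous
  have hdg_cont : Continuous (∂_{c} g : 𝓢(E, F)) := (∂_{c} g : 𝓢(E, F)).continuous
  have hf'g : Integrable (fun x ↦ ℓ c * |m x| * ‖g x‖ ^ 2) μ := by
    refine ((hmg.integrable_mul (g.memLp 2 μ).norm).const_mul (ℓ c)).congr (.of_forall fun x ↦ ?_)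
    simp only [Pi.mul_apply, norm_smul, norm_eq_abs]
    ring
  have hfg : Integrable (fun x ↦ |m x| * ℓ x * ‖g x‖ ^ 2) μ := by
    refine (hℓg.integrable_mul hmg).mono' (by fun_prop) (.of_forall fun x ↦ le_of_eq ?_)
    simp only [Pi.mul_apply, norm_mul, norm_pow, norm_smul, norm_eq_abs, abs_abs, abs_norm]
    ring
  have hfg' : Integrable (fun x ↦ |m x| * ℓ x * (2 * ⟪g x, ∂_{c} g x⟫)) μ :=
    ((integrable_norm_sq_clm_smul ℓ g).add (integrable_norm_sq_clm_smul m (∂_{c} g))).mono'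
      (by fun_prop) (.of_forall fun x ↦ norm_abs_mul_mul_two_inner_le _ _ _ _)
  have weight_deriv (x : E) : HasLineDerivAt ℝ (fun x ↦ |m x| * ℓ x) (ℓ c * |m x|) x c := by
    have h : HasDerivAt (fun t : ℝ ↦ |m x| * (ℓ x + t * ℓ c)) (|m x| * ℓ c) 0 := by
      simpa using (((hasDerivAt_id (0 : ℝ)).mul_const (ℓ c)).const_add (ℓ x)).const_mul |m x|
    simpa [HasLineDerivAt, hm, mul_comm] using h
  have norm_sq_deriv (x : E) :
      HasLineDerivAt ℝ (fun x ↦ ‖g x‖ ^ 2) (2 * ⟪g x, ∂_{c} g x⟫) x c := by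
    simpa [HasLineDerivAt, lineDerivOp_apply_eq_fderiv] using
      ((g.hasFDerivAt x).hasLineDerivAt c).norm_sq
  have by_parts := integral_bilinear_hasLineDerivAt_right_eq_neg_left_of_integrable
    (B := ContinuousLinearMap.mul ℝ ℝ) hf'g hfg' hfg
    (fun x _ ↦ weight_deriv x) (fun x _ ↦ norm_sq_deriv x)
  simp only [ContinuousLinearMap.mul_apply'] at by_parts
  rw [by_parts, neg_neg, ← integral_const_mul]
  simp only [mul_assoc]

theorem abs_mul_integral_abs_clm_mul_norm_sq_le {m : E →L[ℝ] ℝ} {c : E} (hm : m c = 0)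
    (ℓ : E →L[ℝ] ℝ) (g : 𝓢(E, F)) :
    |ℓ c| * ∫ x, |m x| * ‖g x‖ ^ 2 ∂μ ≤
      (∫ x, ‖ℓ x • g x‖ ^ 2 ∂μ) + ∫ x, ‖m x • ∂_{c} g x‖ ^ 2 ∂μ := by
  have weighted_nonneg : 0 ≤ ∫ x, |m x| * ‖g x‖ ^ 2 ∂μ :=
    integral_nonneg fun x ↦ by positivity
  have hℓg := integrable_norm_sq_clm_smul (μ := μ) ℓ g
  have hm_dg := integrable_norm_sq_clm_smul (μ := μ) m (∂_{c} g)
  calc |ℓ c| * ∫ x, |m x| * ‖g x‖ ^ 2 ∂μ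
    _ = ‖∫ x, |m x| * ℓ x * (2 * ⟪g x, ∂_{c} g x⟫) ∂μ‖ := by
        rw [← norm_neg, ← integral_abs_clm_mul_norm_sq_eq_neg hm, norm_mul, norm_eq_abs,
          norm_of_nonneg weighted_nonneg]
    _ ≤ ∫ x, ‖ℓ x • g x‖ ^ 2 + ‖m x • ∂_{c} g x‖ ^ 2 ∂μ :=
        norm_integral_le_of_norm_le (hℓg.add hm_dg)
          (.of_forall fun x ↦ norm_abs_mul_mul_two_inner_le _ _ _ _)
    _ = (∫ x, ‖ℓ x • g x‖ ^ 2 ∂μ) + ∫ x, ‖m x • ∂_{c} g x‖ ^ 2 ∂μ := integral_add hℓg hm_dg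

end RealInner

theorem lineDerivOp_smulLeftCLM_clm {E F : Type*} [NormedAddCommGroup E] [NormedSpace ℝ E]
    [NormedAddCommGroup F] [NormedSpace ℝ F] (ℓ : E →L[ℝ] ℝ) (b : E) (f : 𝓢(E, F)) :
    ∂_{b} (smulLeftCLM F (fun x ↦ ℓ x) f) =
      ℓ b • f + smulLeftCLM F (fun x ↦ ℓ x) (∂_{b} f) := by
  have hℓ : (fun x ↦ ℓ x).HasTemperateGrowth := ℓ.hasTemperateGrowth
  ext x
  have product_rule : HasFDerivAt (fun y ↦ ℓ y • f y)
      (ℓ x • fderiv ℝ f x + ℓ.smulRight (f x)) x := ℓ.hasFDerivAt.smul (f.hasFDerivAt x)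
  simp [lineDerivOp_apply_eq_fderiv, smulLeftCLM_apply hℓ, product_rule.fderiv, add_comm]

section Fourier

variable {V : Type*} [NormedAddCommGroup V] [InnerProductSpace ℝ V] [FiniteDimensional ℝ V]
  [MeasurableSpace V] [BorelSpace V]

variable {F : Type*} [NormedAddCommGroup F] [NormedSpace ℂ F]

theorem norm_fourier_lineDerivOp (f : 𝓢(V, F)) (a ξ : V) :
    ‖𝓕 (∂_{a} f) ξ‖ = ‖(2 * π * ⟪ξ, a⟫) • 𝓕 f ξ‖ := by
  have ha : (fun x : V ↦ ⟪x, a⟫).HasTemperateGrowth := by fun_prop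
  rw [fourier_lineDerivOp_eq, smul_apply, smulLeftCLM_apply_apply ha]
  simp [norm_smul, abs_of_pos pi_pos, mul_assoc]

theorem fourier_inner_smul_lineDerivOp (f : 𝓢(V, F)) {b c : V} (hbc : ⟪b, c⟫ = 0) :
    𝓕 (smulLeftCLM F (fun x ↦ ⟪x, c⟫) (∂_{b} f)) =
      -smulLeftCLM F (fun ξ ↦ ⟪ξ, b⟫) (∂_{c} (𝓕 f)) := by
  have commute : ∂_{b} (smulLeftCLM F (fun x ↦ ⟪x, c⟫) f) =
      smulLeftCLM F (fun x ↦ ⟪x, c⟫) (∂_{b} f) := by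
    simpa only [ContinuousLinearMap.flip_apply, innerSL_apply_apply, hbc, zero_smul, zero_add]
      using lineDerivOp_smulLeftCLM_clm ((innerSL ℝ).flip c) b f
  have hb : (fun x : V ↦ ⟪x, b⟫).HasTemperateGrowth := by fun_prop
  rw [← commute, fourier_lineDerivOp_eq, lineDerivOp_fourier_eq, FourierTransform.fourier_smul]
  ext ξ
  simp only [smul_apply, neg_apply, smulLeftCLM_apply_apply hb, neg_smul, smul_neg, neg_neg]
  rw [smul_comm]

variable {H : Type*} [NormedAddCommGroup H] [InnerProductSpace ℂ H] [CompleteSpace H]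

/-- The bracket of the two fields `∂_a` and `⟪·, c⟫ ∂_b` is `⟪a, c⟫ ∂_b`; the Grushin fields are
the case `a = c = e₀`, `b = e₁`. -/
theorem subelliptic_half_derivative_gain_general (f : 𝓢(V, H)) (a : V) {b c : V}
    (hbc : ⟪b, c⟫ = 0) :
    2 * π * |⟪c, a⟫| * ∫ ξ, |⟪ξ, b⟫| * ‖𝓕 f ξ‖ ^ 2 ≤
      (∫ x, ‖∂_{a} f x‖ ^ 2) + ∫ x, ‖⟪x, c⟫ • ∂_{b} f x‖ ^ 2 := by
  have hb : (fun x : V ↦ ⟪x, b⟫).HasTemperateGrowth := by fun_prop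
  have hc : (fun x : V ↦ ⟪x, c⟫).HasTemperateGrowth := by fun_prop
  have plancherel_a : ∫ ξ, ‖(2 * π * ⟪ξ, a⟫) • 𝓕 f ξ‖ ^ 2 = ∫ x, ‖∂_{a} f x‖ ^ 2 := by
    simp only [← norm_fourier_lineDerivOp, integral_norm_sq_fourier]
  have plancherel_cb : ∫ ξ, ‖⟪ξ, b⟫ • ∂_{c} (𝓕 f) ξ‖ ^ 2 = ∫ x, ‖⟪x, c⟫ • ∂_{b} f x‖ ^ 2 := by
    simpa only [fourier_inner_smul_lineDerivOp f hbc, neg_apply, norm_neg,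
      smulLeftCLM_apply_apply hb, smulLeftCLM_apply_apply hc]
      using integral_norm_sq_fourier (smulLeftCLM H (fun x ↦ ⟪x, c⟫) (∂_{b} f))
  let : InnerProductSpace ℝ H := .rclikeToReal ℂ H
  have fourier_side := abs_mul_integral_abs_clm_mul_norm_sq_le (μ := volume) (F := H)
    (m := (innerSL ℝ).flip b) (inner_eq_zero_symm.mp hbc) ((2 * π) • (innerSL ℝ).flip a) (𝓕 f)
  simpa only [smul_apply, ContinuousLinearMap.flip_apply, innerSL_apply_apply, smul_eq_mul,
    plancherel_a, plancherel_cb, abs_mul, abs_two, abs_of_pos pi_pos] using fourier_side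

end Fourier

/-- Subelliptic half-derivative gain in the `y` direction for the Grushin vector fields
`X₁ = ∂_x`, `X₂ = x∂_y`:
`∫ |η| |v̂(ξ,η)|² ≤ C (‖∂_x v‖² + ‖x∂_y v‖² + ‖v‖²)` for `v ∈ C_c^∞(ℝ²)`. -/
theorem subelliptic_half_derivative_gain :
    ∃ C > (0:ℝ), ∀ v : EuclideanSpace ℝ (Fin 2) → ℂ,
      ContDiff ℝ (⊤ : ℕ∞) v → HasCompactSupport v →
      ∫ p : EuclideanSpace ℝ (Fin 2), |p 1| * ‖𝓕 v p‖ ^ 2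
        ≤ C * ((∫ p : EuclideanSpace ℝ (Fin 2), ‖pdx2 v p‖ ^ 2)
            + (∫ p : EuclideanSpace ℝ (Fin 2), ‖p 0 • pdy2 v p‖ ^ 2)
            + ∫ p : EuclideanSpace ℝ (Fin 2), ‖v p‖ ^ 2) := by
  refine ⟨(2 * π)⁻¹, by positivity, fun v hv hc ↦ ?_⟩
  have coe_schwartz : ⇑(hc.toSchwartzMap hv) = v := rfl
  have orthogonal : ⟪(EuclideanSpace.single 1 1 : EuclideanSpace ℝ (Fin 2)),
      EuclideanSpace.single 0 1⟫ = 0 := by simp [EuclideanSpace.inner_single_right]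
  have gain : 2 * π * ∫ p : EuclideanSpace ℝ (Fin 2), |p 1| * ‖𝓕 v p‖ ^ 2 ≤
      (∫ p, ‖pdx2 v p‖ ^ 2) + ∫ p : EuclideanSpace ℝ (Fin 2), ‖p 0 • pdy2 v p‖ ^ 2 := by
    simpa [pdx2, pdy2, lineDerivOp_apply_eq_fderiv, fourier_coe, coe_schwartz,
      EuclideanSpace.inner_single_right] using
      subelliptic_half_derivative_gain_general (hc.toSchwartzMap hv)
        (EuclideanSpace.single 0 1) orthogonal
  have norm_sq_nonneg : 0 ≤ ∫ p, ‖v p‖ ^ 2 := integral_nonneg fun p ↦ by positivity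
  rw [inv_mul_eq_div, le_div_iff₀' (by positivity)]
  linarith
end
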